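/- For all 0 ≤ h, i, j ≤ d, the restriction of E*_{r+i} A^h E*_{r+j} to W is zero if h < |i−j| and is nonzero if h = |i−j|; likewise, the restriction of E_{t+i} (A*)^h E_{t+j} to W is zero if h < |i−j| and is nonzero if h = |i−j|. -/

import Mathlib

open Matrix
open scoped Classical

noncomputable section

/-- The full setup: a `Q`-polynomial distance-regular graph `Γ = (X,R)` of diameter `D ≥ 3`,
with adjacency matrix `A`, primitive idempotents `E_i`, eigenvalues `θ_i`,
Krein parameters `q^h_{ij}`, a fixed base vertex `x`, dual primitive idempotents `E*_i`,
dual adjacency matrix `A*` and dual eigenvalues `θ*_i`. -/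
structure TSetup (X : Type*) [Fintype X] [DecidableEq X] where
  G : SimpleGraph X
  hGconn : G.Connected
  D : ℕ
  hD3 : 3 ≤ D
  hDiamLe : ∀ y z : X, G.dist y z ≤ D
  hDiamEq : ∃ y z : X, G.dist y z = D
  p : ℕ → ℕ → ℕ → ℕ
  hDRG : ∀ h i j : ℕ, h ≤ D → i ≤ D → j ≤ D → ∀ y z : X, G.dist y z = h →
    Nat.card {w : X // G.dist y w = i ∧ G.dist z w = j} = p h i j
  A : Matrix X X ℂ
  hA : ∀ y z : X, A y z = if G.Adj y z then 1 else 0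
  E : ℕ → Matrix X X ℂ
  hEzero : ∀ i : ℕ, D < i → E i = 0
  hEsum : ∑ i ∈ Finset.range (D + 1), E i = 1
  hEidem : ∀ i j : ℕ, i ≤ D → j ≤ D → E i * E j = if i = j then E i else 0
  hEsymm : ∀ i : ℕ, (E i)ᵀ = E i
  hEreal : ∀ i : ℕ, (E i).map (starRingEnd ℂ) = E i
  hE0 : E 0 = (Fintype.card X : ℂ)⁻¹ • Matrix.of (fun _ _ => (1 : ℂ))
  θ : ℕ → ℝ
  hθinj : ∀ i j : ℕ, i ≤ D → j ≤ D → θ i = θ j → i = j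
  hAspec : A = ∑ i ∈ Finset.range (D + 1), (θ i : ℂ) • E i
  q : ℕ → ℕ → ℕ → ℝ
  hKrein : ∀ i j : ℕ, i ≤ D → j ≤ D →
    Matrix.hadamard (E i) (E j) =
      (Fintype.card X : ℂ)⁻¹ • ∑ h ∈ Finset.range (D + 1), (q h i j : ℂ) • E h
  hQpoly0 : ∀ h i j : ℕ, h ≤ D → i ≤ D → j ≤ D →
    (i + j < h ∨ h + j < i ∨ h + i < j) → q h i j = 0
  hQpoly1 : ∀ h i j : ℕ, h ≤ D → i ≤ D → j ≤ D →
    (h = i + j ∨ i = h + j ∨ j = h + i) → q h i j ≠ 0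
  x : X
  Estar : ℕ → Matrix X X ℂ
  hEstarzero : ∀ i : ℕ, D < i → Estar i = 0
  hEstar : ∀ i : ℕ, i ≤ D → ∀ y z : X,
    Estar i y z = if y = z ∧ G.dist x y = i then 1 else 0
  Astar : Matrix X X ℂ
  hAstar : ∀ y z : X, Astar y z = if y = z then (Fintype.card X : ℂ) * E 1 x y else 0
  θstar : ℕ → ℝ
  hθstarinj : ∀ i j : ℕ, i ≤ D → j ≤ D → θstar i = θstar j → i = j
  hAstarspec : Astar = ∑ i ∈ Finset.range (D + 1), (θstar i : ℂ) • Estar i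

variable {X : Type*} [Fintype X] [DecidableEq X]

/-- The Terwilliger algebra `T = T(x)`, generated by `A` and `A*`. -/
def TSetup.T (S : TSetup X) : Subalgebra ℂ (Matrix X X ℂ) :=
  Algebra.adjoin ℂ {S.A, S.Astar}

/-- A thin irreducible `T`-module `W` with endpoint `r`, dual endpoint `t` and diameter `d`,
where `E*_i W ≠ 0` iff `r ≤ i ≤ r + d` and `E_i W ≠ 0` iff `t ≤ i ≤ t + d`. -/
structure TMod (S : TSetup X) where
  W : Submodule ℂ (X → ℂ)
  hWinv : ∀ B ∈ S.T, ∀ w ∈ W, B *ᵥ w ∈ W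
  hWne : W ≠ ⊥
  hWirr : ∀ U : Submodule ℂ (X → ℂ), U ≤ W →
    (∀ B ∈ S.T, ∀ w ∈ U, B *ᵥ w ∈ U) → U = ⊥ ∨ U = W
  hthin : ∀ i : ℕ, Module.finrank ℂ (W.map (S.Estar i).mulVecLin) ≤ 1
  r : ℕ
  t : ℕ
  d : ℕ
  hr : ∀ i : ℕ, W.map (S.Estar i).mulVecLin ≠ ⊥ ↔ r ≤ i ∧ i ≤ r + d
  ht : ∀ i : ℕ, W.map (S.E i).mulVecLin ≠ ⊥ ↔ t ≤ i ∧ i ≤ t + d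

open Classical in
/-- The action of a matrix `B` on `W` (the restriction of `B` to `W`; defined to be `0`
if `B` does not leave `W` invariant). -/
def actW (S : TSetup X) (M : TMod S) (B : Matrix X X ℂ) : M.W →ₗ[ℂ] M.W :=
  if h : ∀ w ∈ M.W, B.mulVecLin w ∈ M.W then B.mulVecLin.restrict h else 0

/-- `tr_W(B)`: the trace of the action of `B` on `W`. -/
def trW (S : TSetup X) (M : TMod S) (B : Matrix X X ℂ) : ℂ :=
  LinearMap.trace ℂ M.W (actW S M B)

/-- `a_i(W) = tr_W(E*_{r+i} A)`. -/
def aW (S : TSetup X) (M : TMod S) (i : ℕ) : ℂ :=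
  trW S M (S.Estar (M.r + i) * S.A)

/-- `x_i(W) = tr_W(E*_{r+i} A E*_{r+i-1} A)`, with `x_0(W) = 0`. -/
def xW (S : TSetup X) (M : TMod S) (i : ℕ) : ℂ :=
  if i = 0 then 0 else trW S M (S.Estar (M.r + i) * S.A * S.Estar (M.r + i - 1) * S.A)

/-- `a*_i(W) = tr_W(E_{t+i} A*)`. -/
def astarW (S : TSetup X) (M : TMod S) (i : ℕ) : ℂ :=
  trW S M (S.E (M.t + i) * S.Astar)

/-- `x*_i(W) = tr_W(E_{t+i} A* E_{t+i-1} A*)`, with `x*_0(W) = 0`. -/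
def xstarW (S : TSetup X) (M : TMod S) (i : ℕ) : ℂ :=
  if i = 0 then 0 else trW S M (S.E (M.t + i) * S.Astar * S.E (M.t + i - 1) * S.Astar)

/-- The polynomials `p_i`: `p_0 = 1`, `p_{-1} = 0`,
`λ p_i = p_{i+1} + a_i(W) p_i + x_i(W) p_{i-1}`. -/
def pW (S : TSetup X) (M : TMod S) : ℕ → Polynomial ℂ
  | 0 => 1
  | 1 => Polynomial.X - Polynomial.C (aW S M 0)
  | (n + 2) =>
      (Polynomial.X - Polynomial.C (aW S M (n + 1))) * pW S M (n + 1)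
        - Polynomial.C (xW S M (n + 1)) * pW S M n

/-- The polynomials `p*_i`: `p*_0 = 1`, `p*_{-1} = 0`,
`λ p*_i = p*_{i+1} + a*_i(W) p*_i + x*_i(W) p*_{i-1}`. -/
def pstarW (S : TSetup X) (M : TMod S) : ℕ → Polynomial ℂ
  | 0 => 1
  | 1 => Polynomial.X - Polynomial.C (astarW S M 0)
  | (n + 2) =>
      (Polynomial.X - Polynomial.C (astarW S M (n + 1))) * pstarW S M (n + 1)
        - Polynomial.C (xstarW S M (n + 1)) * pstarW S M n

/-- The Hermitian inner product `⟨u,v⟩ = Σ_y u_y conj(v_y)` on `ℂ^X`. -/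
def herm (u v : X → ℂ) : ℂ := ∑ y, u y * (starRingEnd ℂ) (v y)

/-- `ν(W)`, the multiplicative inverse of `m_0(W) = tr_W(E_t E*_r)`. -/
def nuW (S : TSetup X) (M : TMod S) : ℂ :=
  (trW S M (S.E M.t * S.Estar M.r))⁻¹

/-- `k_i(W) = ν(W) m*_i(W)` where `m*_i(W) = tr_W(E*_{r+i} E_t)`. -/
def kW (S : TSetup X) (M : TMod S) (i : ℕ) : ℂ :=
  nuW S M * trW S M (S.Estar (M.r + i) * S.E M.t)

/-- `k*_i(W) = ν(W) m_i(W)` where `m_i(W) = tr_W(E_{t+i} E*_r)`. -/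
def kstarW (S : TSetup X) (M : TMod S) (i : ℕ) : ℂ :=
  nuW S M * trW S M (S.E (M.t + i) * S.Estar M.r)

/-!
On `W`, the nonzero `E*_i` form a complete system of orthogonal idempotents for which `A` is
tridiagonal, by the triangle inequality. The nonzero `E_i` form one for which `A*` is tridiagonal,
because `‖E_i A* E_j‖²` is a multiple of the Krein parameter `q^1_{ij}`. In a tridiagonal matrix the
only path of length `|i - j|` from `j` to `i` is the direct one, so the `(i, j)` block of its
`|i - j|`-th power is a product of consecutive off-diagonal blocks, and shorter powers vanish there.

A vanishing off-diagonal block would make the sum of the components on one side of it an invariant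
subspace, against irreducibility. A product of nonzero consecutive blocks is nonzero when the
components are one-dimensional. For `E*_i` this is thinness, and it gives `dim W = d + 1`; as
`d + 1` of the `E_i` are nonzero on `W`, they too have rank one.
-/

theorem completeOrthogonalIdempotents_comp_embedding {R ι κ : Type*} [Semiring R] [Fintype κ]
    {e : ι → R} (he : OrthogonalIdempotents e) {s : Finset ι} (hs : ∑ i ∈ s, e i = 1)
    (f : κ ↪ ι) (hf : ∀ i, e i ≠ 0 → i ∈ Set.range f) :
    CompleteOrthogonalIdempotents (e ∘ f) where
  toOrthogonalIdempotents := he.embedding f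
  complete := by
    have support_subset : e.support ⊆ s := fun i hi => by
      by_contra his
      exact hi (by rw [← mul_one (e i), ← hs, he.mul_sum_of_notMem his])
    have support_subset_map : e.support ⊆ (Finset.univ.map f : Finset ι) := fun i hi => by
      simpa using hf i hi
    calc ∑ k, (e ∘ f) k = ∑ i ∈ Finset.univ.map f, e i := by simp
      _ = ∑ᶠ i, e i := (finsum_eq_sum_of_support_subset e support_subset_map).symm
      _ = ∑ i ∈ s, e i := finsum_eq_sum_of_support_subset e support_subset
      _ = 1 := hs

theorem mul_eq_sum_of_completeOrthogonalIdempotents {R ι : Type*} [Semiring R] [Fintype ι]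
    {e : ι → R} (he : CompleteOrthogonalIdempotents e) (a b : R) :
    a * b = ∑ i, a * e i * (e i * b) := by
  calc a * b = a * (∑ i, e i) * b := by rw [he.complete, mul_one]
    _ = ∑ i, a * e i * (e i * b) := by
      simp only [Finset.mul_sum, Finset.sum_mul]
      refine Finset.sum_congr rfl fun i _ => ?_
      rw [mul_assoc _ (e i) (e i * b), ← mul_assoc (e i) (e i) b, (he.idem i).eq, ← mul_assoc]

theorem aeval_sum_smul_of_orthogonalIdempotents {K 𝓐 ι : Type*} [CommSemiring K] [Semiring 𝓐]
    [Algebra K 𝓐] {e : ι → 𝓐} (he : OrthogonalIdempotents e) {s : Finset ι}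
    (hs : ∑ i ∈ s, e i = 1) (θ : ι → K) (f : Polynomial K) :
    Polynomial.aeval (∑ i ∈ s, θ i • e i) f = ∑ i ∈ s, f.eval (θ i) • e i := by
  have sum_mul_sum (a b : ι → K) :
      (∑ i ∈ s, a i • e i) * ∑ i ∈ s, b i • e i = ∑ i ∈ s, (a i * b i) • e i := by
    rw [Finset.sum_mul]
    refine Finset.sum_congr rfl fun i hi => ?_
    rw [Finset.mul_sum, Finset.sum_eq_single_of_mem i hi]
    · rw [smul_mul_smul_comm, (he.idem i).eq]
    · intro j _ hji
      rw [smul_mul_smul_comm, he.ortho hji.symm, smul_zero]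
  induction f using Polynomial.induction_on with
  | C a => simp [← Finset.smul_sum, hs, Algebra.algebraMap_eq_smul_one]
  | add p q hp hq => simp [hp, hq, add_smul, Finset.sum_add_distrib]
  | monomial n a ih =>
    rw [pow_succ, ← mul_assoc, map_mul, ih, Polynomial.aeval_X, sum_mul_sum]
    simp

theorem mem_adjoin_sum_smul_of_orthogonalIdempotents {K 𝓐 ι : Type*} [Field K] [Semiring 𝓐]
    [Algebra K 𝓐] {e : ι → 𝓐} (he : OrthogonalIdempotents e) {s : Finset ι}
    (hs : ∑ i ∈ s, e i = 1) {θ : ι → K} (hθ : Set.InjOn θ s) {i : ι} (hi : i ∈ s) :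
    e i ∈ Algebra.adjoin K {∑ j ∈ s, θ j • e j} := by
  suffices Polynomial.aeval (∑ j ∈ s, θ j • e j) (Lagrange.basis s θ i) = e i from
    this ▸ Polynomial.aeval_mem_adjoin_singleton K _
  rw [aeval_sum_smul_of_orthogonalIdempotents he hs, Finset.sum_eq_single_of_mem i hi,
    Lagrange.eval_basis_self hθ hi, one_smul]
  intro j hj hji
  rw [Lagrange.eval_basis_of_ne hji.symm hj, zero_smul]

theorem sum_finrank_range_of_completeOrthogonalIdempotents {K V ι : Type*} [DivisionRing K]
    [AddCommGroup V] [Module K V] [FiniteDimensional K V] [Fintype ι] {e : ι → Module.End K V}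
    (he : CompleteOrthogonalIdempotents e) :
    ∑ i, Module.finrank K (LinearMap.range (e i)) = Module.finrank K V := by
  have sum_apply (v : V) : ∑ i, e i v = v := by
    simpa using LinearMap.congr_fun he.complete v
  have apply_eq (i j : ι) (v : V) : e i (e j v) = if i = j then e i v else 0 := by
    rw [← Module.End.mul_apply, he.mul_eq]
    split_ifs <;> rfl
  rw [← Module.finrank_pi_fintype]
  refine (LinearEquiv.ofBijective (LinearMap.pi fun i => (e i).rangeRestrict)
    ⟨fun v w hvw => ?_, fun u => ?_⟩).finrank_eq.symm
  · rw [← sum_apply v, ← sum_apply w]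
    exact Finset.sum_congr rfl fun i _ => congrArg Subtype.val (congrFun hvw i)
  · choose v hv using fun i => (u i).2
    refine ⟨∑ j, e j (v j), funext fun i => Subtype.ext ?_⟩
    simpa [apply_eq] using hv i

theorem finrank_range_eq_one_of_completeOrthogonalIdempotents {K V ι : Type*} [DivisionRing K]
    [AddCommGroup V] [Module K V] [FiniteDimensional K V] [Fintype ι] {e : ι → Module.End K V}
    (he : CompleteOrthogonalIdempotents e) (hne : ∀ i, e i ≠ 0)
    (hV : Module.finrank K V ≤ Fintype.card ι) (i : ι) :
    Module.finrank K (LinearMap.range (e i)) = 1 := by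
  have one_le (i : ι) : 1 ≤ Module.finrank K (LinearMap.range (e i)) :=
    Submodule.one_le_finrank_iff.2 (LinearMap.range_eq_bot.not.2 (hne i))
  have sum_le : ∑ i, Module.finrank K (LinearMap.range (e i)) ≤ ∑ _i : ι, 1 := by
    simpa [sum_finrank_range_of_completeOrthogonalIdempotents he] using hV
  have sum_eq := sum_le.antisymm (Finset.sum_le_sum fun i _ => one_le i)
  exact ((Finset.sum_eq_sum_iff_of_le fun i _ => one_le i).1 sum_eq.symm i
    (Finset.mem_univ i)).symm

theorem comp_comp_ne_zero_of_finrank_range_eq_one {K V₁ V₂ V₃ V₄ : Type*} [DivisionRing K]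
    [AddCommGroup V₁] [Module K V₁] [AddCommGroup V₂] [Module K V₂] [AddCommGroup V₃] [Module K V₃]
    [AddCommGroup V₄] [Module K V₄] {f : V₁ →ₗ[K] V₂} {p : V₂ →ₗ[K] V₃} {g : V₃ →ₗ[K] V₄}
    (hp : Module.finrank K (LinearMap.range p) = 1) (hgp : g ∘ₗ p ≠ 0) (hpf : p ∘ₗ f ≠ 0) :
    g ∘ₗ p ∘ₗ f ≠ 0 := by
  have : FiniteDimensional K (LinearMap.range p) := Module.finite_of_finrank_eq_succ hp
  have range_le : LinearMap.range (p ∘ₗ f) ≤ LinearMap.range p := LinearMap.range_comp_le_range f p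
  have : FiniteDimensional K (LinearMap.range (p ∘ₗ f)) :=
    Submodule.finiteDimensional_of_le range_le
  have range_eq : LinearMap.range (p ∘ₗ f) = LinearMap.range p := by
    refine Submodule.eq_of_le_of_finrank_le range_le ?_
    rw [hp]
    exact Submodule.one_le_finrank_iff.2 (LinearMap.range_eq_bot.not.2 hpf)
  rwa [Ne, ← LinearMap.range_le_ker_iff, range_eq, LinearMap.range_le_ker_iff]

/-- `A` is tridiagonal with respect to the decomposition of `1` given by the idempotents `e`: its
block `e i * A * e j` vanishes unless `|i - j| ≤ 1`. -/
structure IsTridiagonal {R : Type*} [Semiring R] {n : ℕ} (e : Fin n → R) (A : R) : Prop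
    extends CompleteOrthogonalIdempotents e where
  mul_mul_eq_zero : ∀ i j : Fin n, 1 < Nat.dist i j → e i * A * e j = 0

namespace IsTridiagonal

variable {R : Type*} [Semiring R] {n : ℕ} {e : Fin n → R} {A : R}

theorem comp_rev (H : IsTridiagonal e A) : IsTridiagonal (e ∘ Fin.rev) A where
  toCompleteOrthogonalIdempotents :=
    (CompleteOrthogonalIdempotents.equiv Fin.revPerm).2 H.toCompleteOrthogonalIdempotents
  mul_mul_eq_zero i j hij := by
    refine H.mul_mul_eq_zero _ _ ?_
    simp only [Nat.dist, Fin.val_rev] at hij ⊢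
    omega

theorem mul_pow_mul_eq_zero (H : IsTridiagonal e A) {h : ℕ} {i j : Fin n}
    (hij : h < Nat.dist i j) : e i * A ^ h * e j = 0 := by
  induction h generalizing i with
  | zero =>
    rw [pow_zero, mul_one]
    exact H.ortho fun eq => by simp [eq] at hij
  | succ h ih =>
    rw [pow_succ', ← mul_assoc, mul_assoc,
      mul_eq_sum_of_completeOrthogonalIdempotents H.toCompleteOrthogonalIdempotents]
    refine Finset.sum_eq_zero fun k _ => ?_
    rcases lt_or_ge 1 (Nat.dist i k) with hik | hik
    · rw [H.mul_mul_eq_zero i k hik, zero_mul]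
    · have hkj : h < Nat.dist k j := by
        have := Nat.dist.triangle_inequality i k j
        omega
      rw [← mul_assoc (e k), ih hkj, mul_zero]

theorem mul_pow_succ_mul_eq (H : IsTridiagonal e A) {h : ℕ} {i j k : Fin n} (hjk : (k : ℕ) = j + h)
    (hki : (i : ℕ) = k + 1) :
    e i * A ^ (h + 1) * e j = e i * A * e k * (A ^ h * e j) := by
  rw [pow_succ', ← mul_assoc, mul_assoc,
    mul_eq_sum_of_completeOrthogonalIdempotents H.toCompleteOrthogonalIdempotents,
    Finset.sum_eq_single_of_mem k (Finset.mem_univ k)]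
  · rw [mul_assoc _ (e k), ← mul_assoc (e k) (e k), (H.idem k).eq, ← mul_assoc]
  intro l _ hlk
  rcases Nat.lt_or_gt_of_ne (Fin.val_ne_of_ne hlk) with hlt | hgt
  · rw [H.mul_mul_eq_zero i l (by simp only [Nat.dist]; omega), zero_mul]
  · rw [← mul_assoc (e l), H.mul_pow_mul_eq_zero (by simp only [Nat.dist]; omega), mul_zero]

end IsTridiagonal

/-- `A` is tridiagonal with respect to the decomposition of `V` into the ranges of `e`, each of
which is nonzero, and no proper nonzero subspace of `V` is invariant under `A` and all `e i`. -/
structure IsIrreducibleTridiagonal {K V : Type*} [Ring K] [AddCommGroup V] [Module K V] {n : ℕ}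
    (e : Fin n → Module.End K V) (A : Module.End K V) : Prop extends IsTridiagonal e A where
  ne_zero : ∀ i, e i ≠ 0
  eq_bot_or_eq_top : ∀ U ∈ A.invtSubmodule, (∀ i, U ∈ (e i).invtSubmodule) → U = ⊥ ∨ U = ⊤

namespace IsIrreducibleTridiagonal

section Ring

variable {K V : Type*} [Ring K] [AddCommGroup V] [Module K V] {n : ℕ}
  {e : Fin n → Module.End K V} {A : Module.End K V}

theorem comp_rev (H : IsIrreducibleTridiagonal e A) :
    IsIrreducibleTridiagonal (e ∘ Fin.rev) A where
  toIsTridiagonal := H.toIsTridiagonal.comp_rev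
  ne_zero i := H.ne_zero i.rev
  eq_bot_or_eq_top U hA he := H.eq_bot_or_eq_top U hA fun i => by simpa using he i.rev

theorem eq_empty_or_eq_univ (H : IsIrreducibleTridiagonal e A) {s : Set (Fin n)}
    (hs : ∀ i ∈ s, ∀ j ∉ s, e i * A * e j = 0) : s = ∅ ∨ s = Set.univ := by
  let U : Submodule K V := ⨅ i ∈ s, LinearMap.ker (e i)
  have mem_U {v : V} : v ∈ U ↔ ∀ i ∈ s, e i v = 0 := by simp [U]
  have apply_mem_U {j : Fin n} (hj : j ∉ s) (v : V) : e j v ∈ U := mem_U.2 fun i hi =>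
    LinearMap.congr_fun (H.ortho (ne_of_mem_of_not_mem hi hj)) v
  have invt_A : U ∈ A.invtSubmodule := fun v hv => mem_U.2 fun i hi => by
    have expand : e i (A v) = ∑ k, (e i * A * e k) (e k v) := by
      simpa using LinearMap.congr_fun (mul_eq_sum_of_completeOrthogonalIdempotents
        H.toCompleteOrthogonalIdempotents (e i * A) 1) v
    rw [expand]
    refine Finset.sum_eq_zero fun k _ => ?_
    by_cases hk : k ∈ s
    · rw [mem_U.1 hv k hk, map_zero]
    · rw [hs i hi k hk, LinearMap.zero_apply]
  have invt_e (i : Fin n) : U ∈ (e i).invtSubmodule := fun v hv => by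
    by_cases hi : i ∈ s
    · simp [mem_U.1 hv i hi]
    · exact apply_mem_U hi v
  rcases H.eq_bot_or_eq_top U invt_A invt_e with hU | hU
  · right
    refine Set.eq_univ_of_forall fun j => by_contra fun hj => H.ne_zero j ?_
    ext v
    simpa [hU] using apply_mem_U hj v
  · left
    refine Set.eq_empty_of_forall_notMem fun i hi => H.ne_zero i ?_
    ext v
    exact mem_U.1 (hU ▸ Submodule.mem_top) i hi

theorem mul_mul_ne_zero (H : IsIrreducibleTridiagonal e A) {i j : Fin n} (hij : (i : ℕ) = j + 1) :
    e i * A * e j ≠ 0 := by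
  intro h0
  have block_eq_zero : ∀ k ∈ Set.Ioi j, ∀ l ∉ Set.Ioi j, e k * A * e l = 0 := by
    intro k hk l hl
    rw [Set.mem_Ioi, Fin.lt_def] at hk
    rw [Set.mem_Ioi, Fin.lt_def] at hl
    by_cases hkl : k = i ∧ l = j
    · rwa [hkl.1, hkl.2]
    · refine H.mul_mul_eq_zero k l ?_
      simp only [Fin.ext_iff, Nat.dist] at hkl ⊢
      omega
  rcases H.eq_empty_or_eq_univ block_eq_zero with hempty | huniv
  · exact Set.notMem_empty i (hempty ▸ Fin.lt_def.2 (by omega))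
  · exact lt_irrefl j (huniv.symm ▸ Set.mem_univ j : j ∈ Set.Ioi j)

end Ring

section DivisionRing

variable {K V : Type*} [DivisionRing K] [AddCommGroup V] [Module K V] {n : ℕ}
  {e : Fin n → Module.End K V} {A : Module.End K V}

theorem mul_pow_mul_ne_zero (H : IsIrreducibleTridiagonal e A)
    (he : ∀ i, Module.finrank K (LinearMap.range (e i)) = 1) {h : ℕ} {i j : Fin n}
    (hij : (i : ℕ) = j + h) : e i * A ^ h * e j ≠ 0 := by
  induction h generalizing i with
  | zero =>
    obtain rfl : i = j := Fin.ext hij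
    rw [pow_zero, mul_one, (H.idem i).eq]
    exact H.ne_zero i
  | succ h ih =>
    let k : Fin n := ⟨j + h, by omega⟩
    rw [H.mul_pow_succ_mul_eq (k := k) rfl hij, mul_assoc]
    refine comp_comp_ne_zero_of_finrank_range_eq_one (he k) (H.mul_mul_ne_zero hij) ?_
    rw [← Module.End.mul_eq_comp, ← mul_assoc]
    exact ih rfl

theorem mul_pow_dist_mul_ne_zero (H : IsIrreducibleTridiagonal e A)
    (he : ∀ i, Module.finrank K (LinearMap.range (e i)) = 1) (i j : Fin n) :
    e i * A ^ Nat.dist i j * e j ≠ 0 := by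
  rcases le_total j i with hji | hij
  · exact H.mul_pow_mul_ne_zero he (by simp only [Nat.dist]; omega)
  · have rev_dist : (i.rev : ℕ) = j.rev + Nat.dist i j := by
      simp only [Nat.dist, Fin.val_rev]
      omega
    simpa using H.comp_rev.mul_pow_mul_ne_zero (fun k => he k.rev) rev_dist

end DivisionRing

end IsIrreducibleTridiagonal

theorem isIrreducibleTridiagonal_window {K V : Type*} [CommRing K] [AddCommGroup V] [Module K V]
    {e : ℕ → Module.End K V} (he : OrthogonalIdempotents e) {s : Finset ℕ}
    (hs : ∑ i ∈ s, e i = 1) {a d : ℕ} (hne : ∀ i, e i ≠ 0 ↔ a ≤ i ∧ i ≤ a + d)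
    {A : Module.End K V} (hA : ∀ i j, 1 < Nat.dist i j → e i * A * e j = 0) (θ : ℕ → K)
    (hirr : ∀ U ∈ A.invtSubmodule, U ∈ (∑ i ∈ s, θ i • e i).invtSubmodule → U = ⊥ ∨ U = ⊤) :
    IsIrreducibleTridiagonal (fun i : Fin (d + 1) => e (a + i)) A where
  toCompleteOrthogonalIdempotents :=
    completeOrthogonalIdempotents_comp_embedding he hs
      (Fin.valEmbedding.trans (addLeftEmbedding a)) fun i hi =>
        have hai := (hne i).1 hi
        ⟨⟨i - a, by omega⟩, Nat.add_sub_cancel' hai.1⟩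
  mul_mul_eq_zero i j hij := hA _ _ (by rwa [Nat.dist_add_add_left])
  ne_zero i := (hne _).2 (by omega)
  eq_bot_or_eq_top U hUA hUe := by
    have invt_e (i : ℕ) : U ∈ (e i).invtSubmodule := by
      by_cases hi : e i = 0
      · simp [hi]
      · have hai := (hne i).1 hi
        simpa [Nat.add_sub_cancel' hai.1] using hUe ⟨i - a, by omega⟩
    refine hirr U hUA fun v hv => ?_
    rw [Submodule.mem_comap, LinearMap.sum_apply]
    exact Submodule.sum_mem _ fun i _ => Submodule.smul_mem _ _ (invt_e i hv)

/-- The squared Frobenius norm of `P * diagonal v * Q` is `v ᵥ* (P ⊙ Qᵀ) ⬝ᵥ v`. -/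
theorem mul_diagonal_mul_eq_zero_of_vecMul_hadamard_eq_zero {n 𝕜 : Type*} [Fintype n]
    [DecidableEq n] [RCLike 𝕜] {P Q : Matrix n n 𝕜} (hP : IsStarProjection P)
    (hQ : IsStarProjection Q) {v : n → 𝕜} (hv : star v = v) (h : v ᵥ* (P ⊙ Qᵀ) = 0) :
    P * diagonal v * Q = 0 := by
  open scoped ComplexOrder in
  rw [← Matrix.trace_mul_conjTranspose_self_eq_zero_iff]
  have hPstar : Pᴴ = P := hP.isSelfAdjoint
  have hQstar : Qᴴ = Q := hQ.isSelfAdjoint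
  calc (P * diagonal v * Q * (P * diagonal v * Q)ᴴ).trace
      = (P * (diagonal v * (Q * Q) * diagonal v * P)).trace := by
        simp only [conjTranspose_mul, diagonal_conjTranspose, hv, hPstar, hQstar, mul_assoc]
    _ = (diagonal v * Q * diagonal v * (P * P)).trace := by
        rw [trace_mul_comm, hQ.isIdempotentElem.eq]
        simp only [mul_assoc]
    _ = (diagonal v * P * (diagonal v * Q)).trace := by
        rw [hP.isIdempotentElem.eq, mul_assoc, trace_mul_comm]
    _ = v ᵥ* (P ⊙ Qᵀ) ⬝ᵥ v := by
        rw [dotProduct_vecMul_hadamard, transpose_mul, transpose_transpose, diagonal_transpose]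
    _ = 0 := by rw [h, zero_dotProduct]

theorem mulVec_mem_of_mem_adjoin {n K : Type*} [Fintype n] [DecidableEq n] [CommSemiring K]
    {s : Set (Matrix n n K)} {U : Submodule K (n → K)} (hU : ∀ B ∈ s, ∀ w ∈ U, B *ᵥ w ∈ U)
    {B : Matrix n n K} (hB : B ∈ Algebra.adjoin K s) : ∀ w ∈ U, B *ᵥ w ∈ U := by
  induction hB using Algebra.adjoin_induction with
  | mem B hB => exact hU B hB
  | algebraMap c =>
    intro w hw
    rw [Algebra.algebraMap_eq_smul_one, smul_mulVec, one_mulVec]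
    exact U.smul_mem c hw
  | add B C _ _ hB hC =>
    intro w hw
    rw [add_mulVec]
    exact U.add_mem (hB w hw) (hC w hw)
  | mul B C _ _ hB hC =>
    intro w hw
    rw [← mulVec_mulVec]
    exact hB _ (hC w hw)

theorem injOn_ofReal_range {θ : ℕ → ℝ} {D : ℕ}
    (hθ : ∀ i j : ℕ, i ≤ D → j ≤ D → θ i = θ j → i = j) :
    Set.InjOn (fun i => (θ i : ℂ)) (Finset.range (D + 1)) := fun i hi j hj hij => by
  simp only [Finset.coe_range, Set.mem_Iio, Nat.lt_succ_iff] at hi hj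
  exact hθ i j hi hj (Complex.ofReal_injective hij)

namespace TSetup

variable (S : TSetup X)

theorem orthogonalIdempotents_E : OrthogonalIdempotents S.E :=
  OrthogonalIdempotents.iff_mul_eq.2 fun i j => by
    rcases lt_or_ge S.D i with hi | hi
    · simp [S.hEzero i hi]
    rcases lt_or_ge S.D j with hj | hj
    · rw [S.hEzero j hj, mul_zero, if_neg (by omega)]
    · exact S.hEidem i j hi hj

theorem isStarProjection_E (i : ℕ) : IsStarProjection (S.E i) where
  isIdempotentElem := S.orthogonalIdempotents_E.idem i
  isSelfAdjoint := by
    rw [IsSelfAdjoint, star_eq_conjTranspose, conjTranspose, S.hEsymm]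
    exact S.hEreal i

theorem Estar_eq_diagonal (i : ℕ) :
    S.Estar i = diagonal fun y => if S.G.dist S.x y = i then 1 else 0 := by
  ext y z
  rw [diagonal_apply]
  rcases lt_or_ge S.D i with hi | hi
  · have hne : S.G.dist S.x y ≠ i := ((S.hDiamLe S.x y).trans_lt hi).ne
    simp [S.hEstarzero i hi, hne]
  · rw [S.hEstar i hi, ite_and]

theorem orthogonalIdempotents_Estar : OrthogonalIdempotents S.Estar where
  idem i := by simp [IsIdempotentElem, S.Estar_eq_diagonal]
  ortho i j hij := by
    simp only [S.Estar_eq_diagonal, diagonal_mul_diagonal, diagonal_eq_zero]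
    ext y
    by_cases hy : S.G.dist S.x y = i
    · simp [hy, hij]
    · simp [hy]

theorem sum_Estar : ∑ i ∈ Finset.range (S.D + 1), S.Estar i = 1 := by
  ext y z
  have hy : S.G.dist S.x y < S.D + 1 := Nat.lt_succ_of_le (S.hDiamLe S.x y)
  simp [S.Estar_eq_diagonal, Matrix.sum_apply, diagonal_apply, one_apply, hy]

theorem Estar_mul_A_mul_Estar_eq_zero {i j : ℕ} (hij : 1 < Nat.dist i j) :
    S.Estar i * S.A * S.Estar j = 0 := by
  ext y z
  rw [S.Estar_eq_diagonal, S.Estar_eq_diagonal, mul_diagonal, diagonal_mul, S.hA]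
  have not_adj (hy : S.G.dist S.x y = i) (hz : S.G.dist S.x z = j) : ¬S.G.Adj y z := by
    intro hyz
    have dist_yz := SimpleGraph.dist_eq_one_iff_adj.2 hyz
    have dist_zy := SimpleGraph.dist_eq_one_iff_adj.2 hyz.symm
    have le_xz := S.hGconn.dist_triangle (u := S.x) (v := y) (w := z)
    have le_xy := S.hGconn.dist_triangle (u := S.x) (v := z) (w := y)
    simp only [Nat.dist] at hij
    omega
  by_cases hy : S.G.dist S.x y = i <;> by_cases hz : S.G.dist S.x z = j <;> simp_all

theorem E_mul_hadamard {h i j : ℕ} (hh : h ≤ S.D) (hi : i ≤ S.D) (hj : j ≤ S.D) :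
    S.E h * (S.E i ⊙ S.E j) = ((Fintype.card X : ℂ)⁻¹ * S.q h i j) • S.E h := by
  have h_mem : h ∈ Finset.range (S.D + 1) := Finset.mem_range.2 (by omega)
  rw [S.hKrein i j hi hj, mul_smul_comm, Finset.mul_sum, Finset.sum_eq_single_of_mem h h_mem,
    mul_smul_comm, (S.orthogonalIdempotents_E.idem h).eq, smul_smul]
  intro k _ hkh
  rw [mul_smul_comm, S.orthogonalIdempotents_E.ortho hkh.symm, smul_zero]

theorem Astar_eq_diagonal : S.Astar = diagonal ((Fintype.card X : ℂ) • S.E 1 S.x) := by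
  ext y z
  rw [S.hAstar, diagonal_apply, Pi.smul_apply, smul_eq_mul]

theorem E_mul_Astar_mul_E_eq_zero {i j : ℕ} (hij : 1 < Nat.dist i j) :
    S.E i * S.Astar * S.E j = 0 := by
  rcases lt_or_ge S.D i with hi | hi
  · simp [S.hEzero i hi]
  rcases lt_or_ge S.D j with hj | hj
  · simp [S.hEzero j hj]
  have one_le : 1 ≤ S.D := by linarith [S.hD3]
  have q_eq_zero : S.q 1 i j = 0 :=
    S.hQpoly0 1 i j one_le hi hj (by simp only [Nat.dist] at hij; omega)
  have row_real : star (S.E 1 S.x) = S.E 1 S.x := funext fun y =>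
    congrFun (congrFun (S.hEreal 1) S.x) y
  rw [Astar_eq_diagonal]
  refine mul_diagonal_mul_eq_zero_of_vecMul_hadamard_eq_zero (S.isStarProjection_E i)
    (S.isStarProjection_E j) (by simp [star_smul, row_real]) ?_
  rw [S.hEsymm, smul_vecMul, ← mul_apply_eq_vecMul, S.E_mul_hadamard one_le hi hj, q_eq_zero]
  ext y
  simp

theorem A_mem_T : S.A ∈ S.T := Algebra.subset_adjoin (by simp)

theorem Astar_mem_T : S.Astar ∈ S.T := Algebra.subset_adjoin (by simp)

theorem E_mem_T (i : ℕ) : S.E i ∈ S.T := by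
  rcases lt_or_ge S.D i with hi | hi
  · exact S.hEzero i hi ▸ zero_mem _
  · refine Algebra.adjoin_mono (Set.singleton_subset_iff.2 (by simp [S.hAspec]))
      (mem_adjoin_sum_smul_of_orthogonalIdempotents S.orthogonalIdempotents_E S.hEsum
        (injOn_ofReal_range S.hθinj) (Finset.mem_range_succ_iff.2 hi))

theorem Estar_mem_T (i : ℕ) : S.Estar i ∈ S.T := by
  rcases lt_or_ge S.D i with hi | hi
  · exact S.hEstarzero i hi ▸ zero_mem _
  · refine Algebra.adjoin_mono (Set.singleton_subset_iff.2 (by simp [S.hAstarspec]))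
      (mem_adjoin_sum_smul_of_orthogonalIdempotents S.orthogonalIdempotents_Estar S.sum_Estar
        (injOn_ofReal_range S.hθstarinj) (Finset.mem_range_succ_iff.2 hi))

/-- `A` as an element of `T`. -/
def elemA : S.T := ⟨S.A, S.A_mem_T⟩

/-- `A*` as an element of `T`. -/
def elemAstar : S.T := ⟨S.Astar, S.Astar_mem_T⟩

/-- `E_i` as an element of `T`. -/
def elemE (i : ℕ) : S.T := ⟨S.E i, S.E_mem_T i⟩

/-- `E*_i` as an element of `T`. -/
def elemEstar (i : ℕ) : S.T := ⟨S.Estar i, S.Estar_mem_T i⟩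

theorem orthogonalIdempotents_elemE : OrthogonalIdempotents S.elemE :=
  (OrthogonalIdempotents.map_injective_iff S.T.val.toRingHom Subtype.val_injective).1
    S.orthogonalIdempotents_E

theorem orthogonalIdempotents_elemEstar : OrthogonalIdempotents S.elemEstar :=
  (OrthogonalIdempotents.map_injective_iff S.T.val.toRingHom Subtype.val_injective).1
    S.orthogonalIdempotents_Estar

theorem sum_elemE : ∑ i ∈ Finset.range (S.D + 1), S.elemE i = 1 :=
  Subtype.ext (by simpa [elemE] using S.hEsum)

theorem sum_elemEstar : ∑ i ∈ Finset.range (S.D + 1), S.elemEstar i = 1 :=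
  Subtype.ext (by simpa [elemEstar] using S.sum_Estar)

theorem elemA_eq_sum : S.elemA = ∑ i ∈ Finset.range (S.D + 1), (S.θ i : ℂ) • S.elemE i :=
  Subtype.ext (by simpa [elemA, elemE] using S.hAspec)

theorem elemAstar_eq_sum :
    S.elemAstar = ∑ i ∈ Finset.range (S.D + 1), (S.θstar i : ℂ) • S.elemEstar i :=
  Subtype.ext (by simpa [elemAstar, elemEstar] using S.hAstarspec)

end TSetup

namespace TMod

variable {S : TSetup X} (M : TMod S)

/-- The representation of the Terwilliger algebra on `W`. -/
def rep : S.T →ₐ[ℂ] Module.End ℂ M.W where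
  toFun B := (B : Matrix X X ℂ).mulVecLin.restrict (M.hWinv B B.2)
  map_one' := by ext w : 2; simp
  map_mul' B C := by ext w : 2; exact (mulVec_mulVec _ _ _).symm
  map_zero' := by ext w : 2; simp [LinearMap.restrict_apply]
  map_add' B C := by ext w : 2; exact add_mulVec _ _ _
  commutes' c := by
    ext w : 2
    simp [LinearMap.restrict_apply, Algebra.algebraMap_eq_smul_one]

theorem coe_rep_apply (B : S.T) (w : M.W) : (M.rep B w : X → ℂ) = (B : Matrix X X ℂ) *ᵥ w := rfl

theorem rep_eq_zero_iff {B : S.T} : M.rep B = 0 ↔ ∀ w ∈ M.W, (B : Matrix X X ℂ) *ᵥ w = 0 := by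
  simp [LinearMap.ext_iff, Subtype.ext_iff, coe_rep_apply]

theorem rep_ne_zero_iff {B : S.T} : M.rep B ≠ 0 ↔ ∃ w ∈ M.W, (B : Matrix X X ℂ) *ᵥ w ≠ 0 := by
  simp only [Ne, rep_eq_zero_iff, not_forall, exists_prop]

theorem map_subtype_range_rep (B : S.T) :
    (LinearMap.range (M.rep B)).map M.W.subtype = M.W.map (B : Matrix X X ℂ).mulVecLin := by
  rw [← LinearMap.range_comp, ← LinearMap.range_domRestrict]
  rfl

theorem rep_ne_zero_iff_map_ne_bot {B : S.T} :
    M.rep B ≠ 0 ↔ M.W.map (B : Matrix X X ℂ).mulVecLin ≠ ⊥ := by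
  rw [Ne, Ne, ← M.map_subtype_range_rep,
    ← LinearMap.le_ker_iff_map, Submodule.ker_subtype, le_bot_iff, LinearMap.range_eq_bot]

theorem finrank_range_rep (B : S.T) :
    Module.finrank ℂ (LinearMap.range (M.rep B)) =
      Module.finrank ℂ (M.W.map (B : Matrix X X ℂ).mulVecLin) := by
  rw [← M.map_subtype_range_rep, Submodule.finrank_map_subtype_eq]

theorem eq_bot_or_eq_top {U : Submodule ℂ M.W} (hA : U ∈ (M.rep S.elemA).invtSubmodule)
    (hAstar : U ∈ (M.rep S.elemAstar).invtSubmodule) : U = ⊥ ∨ U = ⊤ := by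
  have invt : ∀ B ∈ S.T, ∀ w ∈ U.map M.W.subtype, B *ᵥ w ∈ U.map M.W.subtype := by
    refine fun B hB => mulVec_mem_of_mem_adjoin ?_ hB
    rintro B (rfl | rfl) _ ⟨w, hw, rfl⟩
    · exact ⟨_, hA hw, rfl⟩
    · exact ⟨_, hAstar hw, rfl⟩
  have map_injective := Submodule.map_injective_of_injective M.W.injective_subtype
  refine (M.hWirr _ (Submodule.map_subtype_le _ _) invt).imp (fun h => ?_) fun h => ?_
  · exact map_injective (by rw [h, Submodule.map_bot])
  · exact map_injective (by rw [h, Submodule.map_subtype_top])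

theorem isIrreducibleTridiagonal_rep {e : ℕ → S.T} (he : OrthogonalIdempotents e) {s : Finset ℕ}
    (hs : ∑ i ∈ s, e i = 1) {a : ℕ}
    (hne : ∀ i, M.W.map (e i : Matrix X X ℂ).mulVecLin ≠ ⊥ ↔ a ≤ i ∧ i ≤ a + M.d) {B : S.T}
    (hB : ∀ i j, 1 < Nat.dist i j → e i * B * e j = 0) (θ : ℕ → ℂ)
    (hirr : ∀ U ∈ (M.rep B).invtSubmodule, U ∈ (M.rep (∑ i ∈ s, θ i • e i)).invtSubmodule →
      U = ⊥ ∨ U = ⊤) :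
    IsIrreducibleTridiagonal (fun i : Fin (M.d + 1) => M.rep (e (a + i))) (M.rep B) := by
  refine isIrreducibleTridiagonal_window (e := M.rep ∘ e) (s := s) (he.map M.rep.toRingHom) ?_
    (fun i => M.rep_ne_zero_iff_map_ne_bot.trans (hne i)) (fun i j hij => ?_) θ ?_
  · simp [← map_sum, hs]
  · simp [← map_mul, hB i j hij]
  · simpa using hirr

theorem isIrreducibleTridiagonal_elemEstar :
    IsIrreducibleTridiagonal (fun i : Fin (M.d + 1) => M.rep (S.elemEstar (M.r + i)))
      (M.rep S.elemA) :=
  M.isIrreducibleTridiagonal_rep S.orthogonalIdempotents_elemEstar S.sum_elemEstar M.hr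
    (fun _ _ hij => Subtype.ext (S.Estar_mul_A_mul_Estar_eq_zero hij)) (fun i => S.θstar i)
    fun _ hA hAstar => M.eq_bot_or_eq_top hA (S.elemAstar_eq_sum ▸ hAstar)

theorem isIrreducibleTridiagonal_elemE :
    IsIrreducibleTridiagonal (fun i : Fin (M.d + 1) => M.rep (S.elemE (M.t + i)))
      (M.rep S.elemAstar) :=
  M.isIrreducibleTridiagonal_rep S.orthogonalIdempotents_elemE S.sum_elemE M.ht
    (fun _ _ hij => Subtype.ext (S.E_mul_Astar_mul_E_eq_zero hij)) (fun i => S.θ i)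
    fun _ hAstar hA => M.eq_bot_or_eq_top (S.elemA_eq_sum ▸ hA) hAstar

theorem finrank_range_rep_elemEstar (i : Fin (M.d + 1)) :
    Module.finrank ℂ (LinearMap.range (M.rep (S.elemEstar (M.r + i)))) = 1 := by
  refine le_antisymm ((M.finrank_range_rep _).trans_le (M.hthin _)) ?_
  exact Submodule.one_le_finrank_iff.2
    (LinearMap.range_eq_bot.not.2 (M.isIrreducibleTridiagonal_elemEstar.ne_zero i))

theorem finrank_W : Module.finrank ℂ M.W = M.d + 1 := by
  rw [← sum_finrank_range_of_completeOrthogonalIdempotents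
    M.isIrreducibleTridiagonal_elemEstar.toCompleteOrthogonalIdempotents]
  simp [finrank_range_rep_elemEstar]

theorem finrank_range_rep_elemE (i : Fin (M.d + 1)) :
    Module.finrank ℂ (LinearMap.range (M.rep (S.elemE (M.t + i)))) = 1 :=
  finrank_range_eq_one_of_completeOrthogonalIdempotents
    M.isIrreducibleTridiagonal_elemE.toCompleteOrthogonalIdempotents
    M.isIrreducibleTridiagonal_elemE.ne_zero (by simp [M.finrank_W]) i

theorem mul_pow_mul_mulVec_eq_zero {n : ℕ} {e : Fin n → S.T} {B : S.T}
    (H : IsTridiagonal (fun i => M.rep (e i)) (M.rep B)) {h : ℕ} {i j : Fin n}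
    (hij : h < Nat.dist i j) :
    ∀ w ∈ M.W, (e i * B ^ h * e j : Matrix X X ℂ) *ᵥ w = 0 :=
  (M.rep_eq_zero_iff (B := e i * B ^ h * e j)).1 (by simpa using H.mul_pow_mul_eq_zero hij)

theorem exists_mul_pow_dist_mul_mulVec_ne_zero {n : ℕ} {e : Fin n → S.T} {B : S.T}
    (H : IsIrreducibleTridiagonal (fun i => M.rep (e i)) (M.rep B))
    (he : ∀ i, Module.finrank ℂ (LinearMap.range (M.rep (e i))) = 1) (i j : Fin n) :
    ∃ w ∈ M.W, (e i * B ^ Nat.dist i j * e j : Matrix X X ℂ) *ᵥ w ≠ 0 :=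
  (M.rep_ne_zero_iff (B := e i * B ^ Nat.dist i j * e j)).1
    (by simpa using H.mul_pow_dist_mul_ne_zero he i j)

end TMod

/-- For `0 ≤ h,i,j ≤ d`, the restriction of `E*_{r+i} A^h E*_{r+j}` to `W` is zero if
`h < |i-j|` and nonzero if `h = |i-j|`; likewise for `E_{t+i} (A*)^h E_{t+j}`. -/
theorem stmt0 (S : TSetup X) (M : TMod S) (hd : 0 < M.d) :
    ∀ h i j : ℕ, h ≤ M.d → i ≤ M.d → j ≤ M.d →
      ((h < Nat.dist i j →
          ∀ w ∈ M.W, (S.Estar (M.r + i) * S.A ^ h * S.Estar (M.r + j)) *ᵥ w = 0) ∧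
        (h = Nat.dist i j →
          ∃ w ∈ M.W, (S.Estar (M.r + i) * S.A ^ h * S.Estar (M.r + j)) *ᵥ w ≠ 0)) ∧
      ((h < Nat.dist i j →
          ∀ w ∈ M.W, (S.E (M.t + i) * S.Astar ^ h * S.E (M.t + j)) *ᵥ w = 0) ∧
        (h = Nat.dist i j →
          ∃ w ∈ M.W, (S.E (M.t + i) * S.Astar ^ h * S.E (M.t + j)) *ᵥ w ≠ 0)) := by
  intro h i j _ hi hj
  let i' : Fin (M.d + 1) := ⟨i, Nat.lt_succ_of_le hi⟩
  let j' : Fin (M.d + 1) := ⟨j, Nat.lt_succ_of_le hj⟩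
  have HEstar := M.isIrreducibleTridiagonal_elemEstar
  have HE := M.isIrreducibleTridiagonal_elemE
  refine ⟨⟨fun hlt => ?_, ?_⟩, ⟨fun hlt => ?_, ?_⟩⟩
  · exact M.mul_pow_mul_mulVec_eq_zero HEstar.toIsTridiagonal (i := i') (j := j') hlt
  · rintro rfl
    exact M.exists_mul_pow_dist_mul_mulVec_ne_zero HEstar M.finrank_range_rep_elemEstar i' j'
  · exact M.mul_pow_mul_mulVec_eq_zero HE.toIsTridiagonal (i := i') (j := j') hlt
  · rintro rfl
    exact M.exists_mul_pow_dist_mul_mulVec_ne_zero HE M.finrank_range_rep_elemE i' j'
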